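/- Assume Condition (A) holds. Let γ : (a, b) → Ω be a differentiable curve with γ'(t) = V(γ(t)) for all t ∈ (a, b), and suppose γ(t₀) = x* for some t₀ ∈ (a, b) and some x* ∈ Γ with V(x*) ≠ 0. Then there exists ε > 0 such that f(γ(t)) = 0 for all t with |t − t₀| < ε; that is, near x* the integral curve γ lies entirely in the hypersurface Γ. -/

import Mathlib

open Filter Topology

/-- Partial derivative of `g : ℝⁿ → ℝ` in the `i`-th coordinate direction. -/
noncomputable def pderiv' {n : ℕ} (g : (Fin n → ℝ) → ℝ) (i : Fin n) (x : Fin n → ℝ) : ℝ :=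
  fderiv ℝ g x (Pi.single i 1)

/-- Divergence of a vector field on ℝⁿ. -/
noncomputable def diverg {n : ℕ} (V : (Fin n → ℝ) → (Fin n → ℝ)) (x : Fin n → ℝ) : ℝ :=
  ∑ i, pderiv' (fun y => V y i) i x

/-- Gradient of `g : ℝⁿ → ℝ`. -/
noncomputable def grad' {n : ℕ} (g : (Fin n → ℝ) → ℝ) (x : Fin n → ℝ) : Fin n → ℝ :=
  fun i => pderiv' g i x

/-- The Euclidean inner product on ℝⁿ. -/
noncomputable def dotp {n : ℕ} (u w : Fin n → ℝ) : ℝ := ∑ i, u i * w i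

/-- Condition (A): for every `x* ∈ Γ`, `|f x|^(r+1) · div W x → 0` as `x → x*`
with `x ∈ Ω \ Γ`. -/
def CondA {n : ℕ} (Ω Γ : Set (Fin n → ℝ)) (f : (Fin n → ℝ) → ℝ) (r : ℝ)
    (W : (Fin n → ℝ) → (Fin n → ℝ)) : Prop :=
  ∀ xs ∈ Γ, Filter.Tendsto (fun x => |f x| ^ (r + 1) * diverg W x)
    (nhdsWithin xs (Ω \ Γ)) (nhds 0)

/-- Condition (B): for every `x* ∈ Γ` with `V x* = 0`, one has
`|f x|^r · div W x → 0` and `|f x|^(r+1) · ∂(div W)/∂x_i x → 0` as `x → x*`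
with `x ∈ Ω \ Γ`, for each `i`. -/
def CondB {n : ℕ} (Ω Γ : Set (Fin n → ℝ)) (f : (Fin n → ℝ) → ℝ) (r : ℝ)
    (V W : (Fin n → ℝ) → (Fin n → ℝ)) : Prop :=
  ∀ xs ∈ Γ, V xs = 0 →
    Filter.Tendsto (fun x => |f x| ^ r * diverg W x) (nhdsWithin xs (Ω \ Γ)) (nhds 0) ∧
    ∀ i : Fin n, Filter.Tendsto (fun x => |f x| ^ (r + 1) * pderiv' (diverg W) i x)
      (nhdsWithin xs (Ω \ Γ)) (nhds 0)

/-!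
Off `Γ` the product rule gives `f |f| ^ r div W = f div V - r ∇f · V`. The left-hand side has the
absolute value of `|f| ^ (r + 1) div W`, so Condition (A) forces `∇f · V` to vanish on `Γ`. Since
`f` is a submersion near a point of `Γ`, a Lipschitz function vanishing on `Γ` is `O(f)` there.
Hence `u = f ∘ γ` satisfies `u' = (∇f · V) ∘ γ = O(u)` and `u t₀ = 0`, and uniqueness for this
linear differential inequality gives `u = 0` near `t₀`.
-/

open Asymptotics Set

section MetricRegularity

variable {𝕜 E F G : Type*} [NontriviallyNormedField 𝕜]
  [NormedAddCommGroup E] [NormedSpace 𝕜 E] [CompleteSpace E]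
  [NormedAddCommGroup F] [NormedSpace 𝕜 F] [CompleteSpace F]
  [SeminormedAddCommGroup G] {f : E → F} {f' : E →L[𝕜] F} {a : E}

theorem exists_dist_levelSet_le_of_hasStrictFDerivAt (hf : HasStrictFDerivAt f f' a)
    (hf' : f'.range = ⊤) :
    ∃ C : ℝ, ∀ s ∈ 𝓝 a, ∀ᶠ x in 𝓝 a, ∃ y ∈ s,
      f y = f a ∧ dist y x ≤ C * dist (f x) (f a) := by
  let g := f'.nonlinearRightInverseOfSurjective hf'
  have hg : 0 < g.nnnorm := f'.nonlinearRightInverseOfSurjective_nnnorm_pos hf'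
  obtain ⟨u, hu, happrox⟩ :=
    hf.approximates_deriv_on_nhds (c := g.nnnorm⁻¹ / 2) (.inr (by positivity))
  refine ⟨2 * g.nnnorm, fun s hs => ?_⟩
  obtain ⟨δ, hδ, hball⟩ := Metric.mem_nhds_iff.1 (inter_mem hs hu)
  have hsmall : ∀ᶠ x in 𝓝 a, 2 * (g.nnnorm : ℝ) * dist (f x) (f a) + dist x a < δ := by
    have hcont : ContinuousAt (fun x => 2 * (g.nnnorm : ℝ) * dist (f x) (f a) + dist x a) a :=
      (continuousAt_const.mul (hf.continuousAt.dist continuousAt_const)).add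
        (continuousAt_id.dist continuousAt_const)
    exact hcont.eventually_lt continuousAt_const (by simpa using hδ)
  filter_upwards [hsmall] with x hx
  have hsub : Metric.closedBall x (2 * g.nnnorm * dist (f x) (f a)) ⊆ s ∩ u :=
    (Metric.closedBall_subset_ball' hx).trans hball
  have hmem : f a ∈ Metric.closedBall (f x)
      (((g.nnnorm : ℝ)⁻¹ - (g.nnnorm⁻¹ / 2 : NNReal)) * (2 * g.nnnorm * dist (f x) (f a))) := by
    have hg₀ : (g.nnnorm : ℝ) ≠ 0 := mod_cast hg.ne'
    rw [Metric.mem_closedBall, dist_comm]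
    push_cast
    apply le_of_eq
    field_simp
    ring
  obtain ⟨y, hy, hfy⟩ := happrox.surjOn_closedBall_of_nonlinearRightInverse g (by positivity)
    (hsub.trans inter_subset_right) hmem
  exact ⟨y, (hsub hy).1, hfy, hy⟩

theorem isBigO_sub_of_eqOn_levelSet (hf : HasStrictFDerivAt f f' a) (hf' : f'.range = ⊤)
    {h : E → G} {K : NNReal} {s : Set E} (hs : s ∈ 𝓝 a) (hLip : LipschitzOnWith K h s)
    (hzero : ∀ᶠ x in 𝓝 a, f x = f a → h x = 0) :
    h =O[𝓝 a] fun x => f x - f a := by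
  obtain ⟨C, hC⟩ := exists_dist_levelSet_le_of_hasStrictFDerivAt hf hf'
  refine IsBigO.of_bound (K * C) ?_
  filter_upwards [hC _ (inter_mem hs hzero), hs] with x ⟨y, ⟨hys, hyzero⟩, hfy, hyx⟩ hxs
  calc ‖h x‖ = ‖h x - h y‖ := by rw [hyzero hfy, sub_zero]
    _ ≤ K * dist y x := by
      rw [← dist_eq_norm, dist_comm y]
      exact hLip.dist_le_mul x hxs y hys
    _ ≤ K * (C * dist (f x) (f a)) := by gcongr
    _ = K * C * ‖f x - f a‖ := by rw [dist_eq_norm, mul_assoc]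

end MetricRegularity

section IntegralCurve

variable {E F : Type*} [NormedAddCommGroup E] [NormedSpace ℝ E]
  [NormedAddCommGroup F] [NormedSpace ℝ F]

theorem eventuallyEq_zero_of_deriv_isBigO {u u' : ℝ → E} {t₀ : ℝ}
    (hu : ∀ᶠ t in 𝓝 t₀, HasDerivAt u (u' t) t) (hu' : u' =O[𝓝 t₀] u) (h₀ : u t₀ = 0) :
    u =ᶠ[𝓝 t₀] 0 := by
  obtain ⟨K, hK, hbound⟩ := hu'.exists_nonneg
  lift K to NNReal using hK
  -- Both `u` and `0` solve the ODE `x' = v t x`, which is Lipschitz in `x`.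
  let v : ℝ → E → E := fun t x => (‖x‖ / ‖u t‖) • u' t
  have hLip : ∀ᶠ t in 𝓝 t₀, LipschitzOnWith K (v t) univ := by
    filter_upwards [hbound.bound] with t ht
    refine LipschitzOnWith.of_dist_le_mul fun x _ y _ => ?_
    calc dist (v t x) (v t y) = |‖x‖ - ‖y‖| * (‖u' t‖ / ‖u t‖) := by
          rw [dist_eq_norm, ← sub_smul, ← sub_div, norm_smul, norm_div, norm_norm, Real.norm_eq_abs]
          ring
      _ ≤ dist x y * K := by
          gcongr
          · exact (abs_norm_sub_norm_le x y).trans_eq (dist_eq_norm x y).symm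
          · exact div_le_of_le_mul₀ (norm_nonneg _) K.2 ht
      _ = K * dist x y := mul_comm _ _
  have hv : ∀ᶠ t in 𝓝 t₀, v t (u t) = u' t := by
    filter_upwards [hbound.bound] with t ht
    rcases eq_or_ne (u t) 0 with hut | hut
    · have : u' t = 0 := by simpa [hut] using ht
      simp [v, this]
    · simp [v, hut]
  refine ODE_solution_unique_of_eventually hLip ?_ ?_ h₀
  · filter_upwards [hu, hv] with t ht hvt
    exact ⟨hvt ▸ ht, mem_univ _⟩
  · exact .of_forall fun t => ⟨by simp [v], mem_univ _⟩

theorem eventually_eq_of_tangent_levelSet [CompleteSpace E] [CompleteSpace F]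
    {f : E → F} {V : E → E} {γ : ℝ → E} {t₀ : ℝ}
    (hf : ContDiffAt ℝ 2 f (γ t₀)) (hV : ContDiffAt ℝ 1 V (γ t₀))
    (hsurj : (fderiv ℝ f (γ t₀)).range = ⊤)
    (htangent : ∀ᶠ x in 𝓝 (γ t₀), f x = f (γ t₀) → fderiv ℝ f x (V x) = 0)
    (hγ : ∀ᶠ t in 𝓝 t₀, HasDerivAt γ (V (γ t)) t) :
    ∀ᶠ t in 𝓝 t₀, f (γ t) = f (γ t₀) := by
  have hγcont : Tendsto γ (𝓝 t₀) (𝓝 (γ t₀)) := hγ.self_of_nhds.continuousAt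
  have hfV : ContDiffAt ℝ 1 (fun x => fderiv ℝ f x (V x)) (γ t₀) :=
    (hf.fderiv_right (by norm_num)).clm_apply hV
  obtain ⟨K, s, hs, hLip⟩ := hfV.exists_lipschitzOnWith
  have hbigO := isBigO_sub_of_eqOn_levelSet (hf.hasStrictFDerivAt (by norm_num)) hsurj hs hLip
    htangent
  have hderiv : ∀ᶠ t in 𝓝 t₀,
      HasDerivAt (fun t => f (γ t) - f (γ t₀)) (fderiv ℝ f (γ t) (V (γ t))) t := by
    filter_upwards [hγ, hγcont.eventually (hf.eventually (by simp))] with t hγt hft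
    exact ((hft.differentiableAt (by norm_num)).hasFDerivAt.comp_hasDerivAt t hγt).sub_const _
  exact (eventuallyEq_zero_of_deriv_isBigO hderiv (hbigO.comp_tendsto hγcont) (sub_self _)).mono
    fun t ht => sub_eq_zero.1 ht

end IntegralCurve

theorem hasFDerivAt_abs_rpow_const {E : Type*} [NormedAddCommGroup E] [NormedSpace ℝ E]
    {f : E → ℝ} {f' : E →L[ℝ] ℝ} {x : E} (hf : HasFDerivAt f f' x) (hx : f x ≠ 0) (p : ℝ) :
    HasFDerivAt (fun y => |f y| ^ p) ((p * |f x| ^ p / f x) • f') x := by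
  have habs : |f x| ≠ 0 := abs_ne_zero.2 hx
  have hcoeff : (SignType.sign (f x) : ℝ) * p * |f x| ^ (p - 1) = p * |f x| ^ p / f x := by
    rw [Real.rpow_sub_one habs]
    field_simp
    rw [mul_right_comm, sign_mul_self, mul_comm]
  exact (((hasDerivAt_abs hx).rpow_const (.inl habs)).comp_hasFDerivAt x hf).congr_fderiv
    (by rw [hcoeff])

theorem neBot_nhdsWithin_ne_of_fderiv_ne_zero {𝕜 E F : Type*} [NontriviallyNormedField 𝕜]
    [NormedAddCommGroup E] [NormedSpace 𝕜 E] [NormedAddCommGroup F] [NormedSpace 𝕜 F]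
    {f : E → F} {x : E} (hf : fderiv 𝕜 f x ≠ 0) (c : F) :
    (𝓝[{y | f y ≠ c}] x).NeBot := by
  refine mem_closure_iff_nhdsWithin_neBot.1 (mem_closure_iff_frequently.2 fun hconst => hf ?_)
  have hconst' : f =ᶠ[𝓝 x] fun _ => c := hconst.mono fun y hy => not_not.1 hy
  rw [hconst'.fderiv_eq, fderiv_const_apply]

section Divergence

variable {n : ℕ} {f : (Fin n → ℝ) → ℝ} {V W : (Fin n → ℝ) → (Fin n → ℝ)} {r : ℝ} {x : Fin n → ℝ}

theorem fderiv_apply_eq_sum_pderiv' (v : Fin n → ℝ) :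
    fderiv ℝ f x v = ∑ i, v i * pderiv' f i x := by
  conv_lhs => rw [pi_eq_sum_univ' v]
  simp only [map_sum, map_smul, smul_eq_mul, pderiv']

theorem fderiv_ne_zero_of_grad'_ne_zero (hf : grad' f x ≠ 0) : fderiv ℝ f x ≠ 0 := by
  contrapose! hf
  ext i
  simp [grad', pderiv', hf]

theorem diverg_congr (h : V =ᶠ[𝓝 x] W) : diverg V x = diverg W x := by
  refine Finset.sum_congr rfl fun i _ => ?_
  have hi : (fun y => V y i) =ᶠ[𝓝 x] fun y => W y i := h.mono fun y hy => congrFun hy i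
  rw [pderiv', pderiv', hi.fderiv_eq]

theorem diverg_smul (hf : DifferentiableAt ℝ f x) (hV : DifferentiableAt ℝ V x) :
    diverg (fun y => f y • V y) x = f x * diverg V x + fderiv ℝ f x (V x) := by
  have hpderiv (i : Fin n) : pderiv' (fun y => f y * V y i) i x =
      f x * pderiv' (fun y => V y i) i x + V x i * pderiv' f i x := by
    simp [pderiv', fderiv_fun_mul hf (differentiableAt_pi.1 hV i)]
  simp only [diverg, Pi.smul_apply, smul_eq_mul, hpderiv, Finset.sum_add_distrib, Finset.mul_sum,
    fderiv_apply_eq_sum_pderiv']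

theorem continuousAt_diverg (hV : ContDiffAt ℝ 1 V x) : ContinuousAt (diverg V) x :=
  tendsto_finsetSum _ fun i _ => ((contDiffAt_pi.1 hV i).fderiv_right (m := 0)
    (by simp)).continuousAt.clm_apply continuousAt_const

theorem mul_abs_rpow_mul_diverg (hf : DifferentiableAt ℝ f x) (hV : DifferentiableAt ℝ V x)
    (hx : f x ≠ 0) (hW : W =ᶠ[𝓝 x] fun y => |f y| ^ (-r) • V y) :
    f x * |f x| ^ r * diverg W x = f x * diverg V x - r * fderiv ℝ f x (V x) := by
  have hpow := hasFDerivAt_abs_rpow_const hf.hasFDerivAt hx (-r)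
  have hcancel : |f x| ^ r * |f x| ^ (-r) = 1 := by
    rw [← Real.rpow_add (abs_pos.2 hx), add_neg_cancel, Real.rpow_zero]
  rw [diverg_congr hW, diverg_smul hpow.differentiableAt hV, hpow.fderiv,
    smul_apply, smul_eq_mul]
  field_simp
  linear_combination (f x * diverg V x - r * fderiv ℝ f x (V x)) * hcancel

theorem fderiv_apply_eq_zero_of_tendsto_diverg (hf : ContDiffAt ℝ 1 f x)
    (hV : ContDiffAt ℝ 1 V x) (hx : f x = 0) (hfx : fderiv ℝ f x ≠ 0) (hr : r ≠ 0)
    (hW : ∀ᶠ y in 𝓝 x, f y ≠ 0 → W y = |f y| ^ (-r) • V y)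
    (hdiv : Tendsto (fun y => |f y| ^ (r + 1) * diverg W y) (𝓝[{y | f y ≠ 0}] x) (𝓝 0)) :
    fderiv ℝ f x (V x) = 0 := by
  have := neBot_nhdsWithin_ne_of_fderiv_ne_zero hfx 0
  have hleft : Tendsto (fun y => f y * |f y| ^ r * diverg W y) (𝓝[{y | f y ≠ 0}] x) (𝓝 0) := by
    rw [tendsto_zero_iff_abs_tendsto_zero] at hdiv ⊢
    refine hdiv.congr' ?_
    filter_upwards [self_mem_nhdsWithin] with y hy
    simp [Real.rpow_add_one (abs_ne_zero.2 hy), abs_mul, mul_comm |f y|]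
  have hformula : ∀ᶠ y in 𝓝[{y | f y ≠ 0}] x,
      f y * |f y| ^ r * diverg W y = f y * diverg V y - r * fderiv ℝ f y (V y) := by
    rw [eventually_nhdsWithin_iff]
    filter_upwards [hf.eventually (by simp), hV.eventually (by simp),
      eventually_eventually_nhds.2 hW] with y hfy hVy hWy hy
    refine mul_abs_rpow_mul_diverg (hfy.differentiableAt one_ne_zero)
      (hVy.differentiableAt one_ne_zero) hy ?_
    filter_upwards [hWy, hfy.continuousAt.eventually_ne hy] with z hWz hz using hWz hz
  have hright : ContinuousAt (fun y => f y * diverg V y - r * fderiv ℝ f y (V y)) x :=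
    (hf.continuousAt.mul (continuousAt_diverg hV)).sub (continuousAt_const.mul
      ((hf.fderiv_right (m := 0) (by simp)).continuousAt.clm_apply hV.continuousAt))
  have hlim := tendsto_nhds_unique (hright.tendsto.mono_left nhdsWithin_le_nhds)
    (hleft.congr' hformula)
  simpa [hx, hr] using hlim

end Divergence

theorem stmt4_general {n : ℕ} {Ω Γ : Set (Fin n → ℝ)} (hΩ : IsOpen Ω) {f : (Fin n → ℝ) → ℝ}
    (hf : ContDiffOn ℝ 2 f Ω) (hΓ : Γ = {x | x ∈ Ω ∧ f x = 0})
    {V : (Fin n → ℝ) → (Fin n → ℝ)} (hV : ContDiffOn ℝ 1 V Ω) {r : ℝ} (hr : r ≠ 0)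
    {W : (Fin n → ℝ) → (Fin n → ℝ)} (hW : ∀ x ∈ Ω \ Γ, W x = |f x| ^ (-r) • V x)
    (hA : CondA Ω Γ f r W) {γ : ℝ → (Fin n → ℝ)} {t₀ : ℝ}
    (hγ : ∀ᶠ t in 𝓝 t₀, HasDerivAt γ (V (γ t)) t) (hγΓ : γ t₀ ∈ Γ) (hreg : grad' f (γ t₀) ≠ 0) :
    ∀ᶠ t in 𝓝 t₀, f (γ t) = 0 := by
  subst hΓ
  obtain ⟨hγΩ, hγ₀⟩ := hγΓ
  have hf₀ := hf.contDiffAt (hΩ.mem_nhds hγΩ)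
  have hfderiv := fderiv_ne_zero_of_grad'_ne_zero hreg
  have hfderiv_near : ∀ᶠ x in 𝓝 (γ t₀), fderiv ℝ f x ≠ 0 :=
    (hf₀.fderiv_right (m := 0) (by norm_num)).continuousAt.eventually_ne hfderiv
  have htangent : ∀ᶠ x in 𝓝 (γ t₀), f x = 0 → fderiv ℝ f x (V x) = 0 := by
    filter_upwards [hfderiv_near, hΩ.mem_nhds hγΩ] with x hfx hxΩ hx
    have hΩx := hΩ.mem_nhds hxΩ
    have hoff : ∀ᶠ y in 𝓝 x, f y ≠ 0 → y ∈ Ω \ {x | x ∈ Ω ∧ f x = 0} := by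
      filter_upwards [hΩx] with y hyΩ hy using ⟨hyΩ, fun hyΓ => hy hyΓ.2⟩
    exact fderiv_apply_eq_zero_of_tendsto_diverg ((hf.contDiffAt hΩx).of_le (by norm_num))
      (hV.contDiffAt hΩx) hx hfx hr (hoff.mono fun y hy hfy => hW y (hy hfy))
      ((hA x ⟨hxΩ, hx⟩).mono_left (nhdsWithin_le_iff.2 (mem_nhdsWithin_iff_eventually.2 hoff)))
  have hsurj : (fderiv ℝ f (γ t₀)).range = ⊤ :=
    Module.Dual.range_eq_top_of_ne_zero (mod_cast hfderiv)
  simpa only [hγ₀] using eventually_eq_of_tangent_levelSet hf₀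
    (hV.contDiffAt (hΩ.mem_nhds hγΩ)) hsurj (by simpa only [hγ₀] using htangent) hγ

/-- Assume Condition (A). If `γ` is an integral curve of `V` passing at time `t₀`
through a point `x* ∈ Γ` with `V x* ≠ 0`, then near `x*` the curve lies entirely
in the hypersurface `Γ`: `f (γ t) = 0` for all `t` close to `t₀`. -/
theorem stmt4 {n : ℕ} (hn : 2 ≤ n) (Ω Γ : Set (Fin n → ℝ)) (hΩ : IsOpen Ω)
    (f : (Fin n → ℝ) → ℝ) (s : ℕ) (hs : 2 ≤ s) (hf : ContDiffOn ℝ s f Ω)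
    (hΓ : Γ = {x | x ∈ Ω ∧ f x = 0}) (hΓne : Γ.Nonempty)
    (hreg : ∀ x ∈ Γ, grad' f x ≠ 0)
    (V : (Fin n → ℝ) → (Fin n → ℝ)) (hV : ContDiffOn ℝ s V Ω)
    (r : ℝ) (hr : 0 < r)
    (W : (Fin n → ℝ) → (Fin n → ℝ))
    (hW : ∀ x ∈ Ω \ Γ, W x = |f x| ^ (-r) • V x)
    (hA : CondA Ω Γ f r W)
    (a b t₀ : ℝ) (γ : ℝ → (Fin n → ℝ)) (ht₀ : t₀ ∈ Set.Ioo a b)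
    (hγΩ : ∀ t ∈ Set.Ioo a b, γ t ∈ Ω)
    (hγ : ∀ t ∈ Set.Ioo a b, HasDerivAt γ (V (γ t)) t)
    (xs : Fin n → ℝ) (hxs : xs ∈ Γ) (hγt₀ : γ t₀ = xs) (hVxs : V xs ≠ 0) :
    ∃ ε > 0, ∀ t : ℝ, |t - t₀| < ε → f (γ t) = 0 :=
  Metric.eventually_nhds_iff.1 <| stmt4_general hΩ (hf.of_le (mod_cast hs)) hΓ
    (hV.of_le (mod_cast one_le_two.trans hs)) hr.ne' hW hA
    (eventually_of_mem (Ioo_mem_nhds ht₀.1 ht₀.2) hγ) (hγt₀ ▸ hxs) (hγt₀ ▸ hreg xs hxs)
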